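/- Let T, C, K > 0, let u₀ : ℝ → ℝ be smooth and 1-periodic, let g_n ∈ C^∞(ℝ²) with ‖g_n‖_∞ ≤ C for every n, and for each n let u_n : [0,1] × [0,T] → ℝ be a smooth solution of the graph equation u_t = u_xx/(1 + u_x²) + g_n(x, u) √(1 + u_x²) with periodic-type boundary conditions, u_n(·,0) = u₀, and ‖u_n(·,t)‖_{H¹([0,1])} ≤ K for all t ∈ [0,T]. Then there exist a subsequence (u_{n_k}) and a continuous function u : [0,1] × [0,T] → ℝ, satisfying |u(x,t) − u(y,s)| ≤ C'(|x−y|^{1/2} + |t−s|^{1/4}) for some constant C' and all x, y, t, s, such that u_{n_k} converges to u uniformly on [0,1] × [0,T]. -/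

import Mathlib

open Real MeasureTheory

noncomputable section

/-- partial derivative in the first (space) variable -/
def pdx (f : ℝ → ℝ → ℝ) : ℝ → ℝ → ℝ := fun x t => deriv (fun x' => f x' t) x

/-- partial derivative in the second (time) variable -/
def pdt (f : ℝ → ℝ → ℝ) : ℝ → ℝ → ℝ := fun x t => deriv (fun t' => f x t') t

/-- `u` is a smooth solution on `[0,1] × [0,T]` of the graph equation
`u_t = u_xx/(1+u_x²) + g(x,u)√(1+u_x²)` with periodic-type boundary conditions. -/
def IsGraphSol (g : ℝ → ℝ → ℝ) (T : ℝ) (u : ℝ → ℝ → ℝ) : Prop :=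
  ContDiff ℝ (⊤ : ℕ∞) (fun p : ℝ × ℝ => u p.1 p.2) ∧
  (∀ x ∈ Set.Icc (0:ℝ) 1, ∀ t ∈ Set.Icc 0 T,
    pdt u x t = pdx (pdx u) x t / (1 + (pdx u x t) ^ 2)
      + g x (u x t) * Real.sqrt (1 + (pdx u x t) ^ 2)) ∧
  (∀ t ∈ Set.Icc 0 T,
    u 0 t - u 0 0 = u 1 t - u 1 0 ∧ pdx u 0 t = pdx u 1 t)

def Sm (u : ℝ → ℝ → ℝ) : Prop := ContDiff ℝ (⊤ : ℕ∞) (fun p : ℝ × ℝ => u p.1 p.2)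

lemma Sm.fst {u : ℝ → ℝ → ℝ} (h : Sm u) (t : ℝ) : ContDiff ℝ (⊤ : ℕ∞) (fun x => u x t) :=
  ContDiff.comp (g := fun p : ℝ × ℝ => u p.1 p.2) (f := fun x : ℝ => (x, t)) h
    (contDiff_id.prodMk contDiff_const)

lemma Sm.snd {u : ℝ → ℝ → ℝ} (h : Sm u) (x : ℝ) : ContDiff ℝ (⊤ : ℕ∞) (fun t => u x t) :=
  ContDiff.comp (g := fun p : ℝ × ℝ => u p.1 p.2) (f := fun t : ℝ => (x, t)) h
    (contDiff_const.prodMk contDiff_id)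

lemma Sm.hx {u : ℝ → ℝ → ℝ} (h : Sm u) (x t : ℝ) : HasDerivAt (fun x' => u x' t) (pdx u x t) x :=
  ((h.fst t).differentiable (by simp) x).hasDerivAt

lemma Sm.ht {u : ℝ → ℝ → ℝ} (h : Sm u) (x t : ℝ) : HasDerivAt (fun t' => u x t') (pdt u x t) t :=
  ((h.snd x).differentiable (by simp) t).hasDerivAt

lemma Sm.fx {u : ℝ → ℝ → ℝ} (h : Sm u) (p : ℝ × ℝ) :
    fderiv ℝ (fun p : ℝ × ℝ => u p.1 p.2) p (1, 0) = pdx u p.1 p.2 := by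
  have h1 : HasFDerivAt (fun p : ℝ × ℝ => u p.1 p.2)
      (fderiv ℝ (fun p : ℝ × ℝ => u p.1 p.2) p) ((fun x : ℝ => (x, p.2)) p.1) :=
    (ContDiff.differentiable h (by simp) p).hasFDerivAt
  have h2 : HasDerivAt (fun x : ℝ => (x, p.2)) ((1 : ℝ), (0 : ℝ)) p.1 :=
    (hasDerivAt_id _).prodMk (hasDerivAt_const _ _)
  have h3 := h1.comp_hasDerivAt p.1 h2
  exact h3.unique (h.hx p.1 p.2)

lemma Sm.ft {u : ℝ → ℝ → ℝ} (h : Sm u) (p : ℝ × ℝ) :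
    fderiv ℝ (fun p : ℝ × ℝ => u p.1 p.2) p (0, 1) = pdt u p.1 p.2 := by
  have h1 : HasFDerivAt (fun p : ℝ × ℝ => u p.1 p.2)
      (fderiv ℝ (fun p : ℝ × ℝ => u p.1 p.2) p) ((fun t : ℝ => (p.1, t)) p.2) :=
    (ContDiff.differentiable h (by simp) p).hasFDerivAt
  have h2 : HasDerivAt (fun t : ℝ => (p.1, t)) ((0 : ℝ), (1 : ℝ)) p.2 :=
    (hasDerivAt_const _ _).prodMk (hasDerivAt_id _)
  have h3 := h1.comp_hasDerivAt p.2 h2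
  exact h3.unique (h.ht p.1 p.2)

lemma Sm.pdx {u : ℝ → ℝ → ℝ} (h : Sm u) : Sm (pdx u) := by
  have h1 : ContDiff ℝ (⊤ : ℕ∞) (fderiv ℝ (fun p : ℝ × ℝ => u p.1 p.2)) :=
    ContDiff.fderiv_right (m := ((⊤ : ℕ∞) : WithTop ℕ∞)) h (by simp)
  have h2 := h1.clm_apply (contDiff_const (c := ((1 : ℝ), (0 : ℝ))))
  simp only [h.fx] at h2
  exact h2

lemma Sm.pdt {u : ℝ → ℝ → ℝ} (h : Sm u) : Sm (pdt u) := by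
  have h1 : ContDiff ℝ (⊤ : ℕ∞) (fderiv ℝ (fun p : ℝ × ℝ => u p.1 p.2)) :=
    ContDiff.fderiv_right (m := ((⊤ : ℕ∞) : WithTop ℕ∞)) h (by simp)
  have h2 := h1.clm_apply (contDiff_const (c := ((0 : ℝ), (1 : ℝ))))
  simp only [h.ft] at h2
  exact h2

lemma Sm.comm {u : ℝ → ℝ → ℝ} (h : Sm u) (x t : ℝ) :
    _root_.pdx (_root_.pdt u) x t = _root_.pdt (_root_.pdx u) x t := by
  have h1 : ContDiff ℝ (⊤ : ℕ∞) (fderiv ℝ (fun p : ℝ × ℝ => u p.1 p.2)) :=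
    ContDiff.fderiv_right (m := ((⊤ : ℕ∞) : WithTop ℕ∞)) h (by simp)
  have hd := (h1.differentiable (by simp) (x, t)).hasFDerivAt
  have hs : IsSymmSndFDerivAt ℝ (fun p : ℝ × ℝ => u p.1 p.2) (x, t) :=
    (ContDiff.contDiffAt h).isSymmSndFDerivAt (by
      simp only [minSmoothness_of_isRCLikeNormedField]
      exact WithTop.coe_le_coe.2 (le_top : (2 : ℕ∞) ≤ ⊤))
  have e1 := h.pdt.fx (x, t)
  have e2 := h.pdx.ft (x, t)
  have f1 : (fun p : ℝ × ℝ => _root_.pdt u p.1 p.2) =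
      fun p => fderiv ℝ (fun p : ℝ × ℝ => u p.1 p.2) p (0, 1) := by
    funext p; exact (h.ft p).symm
  have f2 : (fun p : ℝ × ℝ => _root_.pdx u p.1 p.2) =
      fun p => fderiv ℝ (fun p : ℝ × ℝ => u p.1 p.2) p (1, 0) := by
    funext p; exact (h.fx p).symm
  rw [f1] at e1
  rw [f2] at e2
  have k1 := (hd.clm_apply (hasFDerivAt_const ((0 : ℝ), (1 : ℝ)) (x, t))).fderiv
  have k2 := (hd.clm_apply (hasFDerivAt_const ((1 : ℝ), (0 : ℝ)) (x, t))).fderiv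
  rw [k1] at e1
  rw [k2] at e2
  simp at e1 e2
  rw [← e1, ← e2]
  exact hs _ _

lemma Sm.cont {u : ℝ → ℝ → ℝ} (h : Sm u) : Continuous (fun p : ℝ × ℝ => u p.1 p.2) :=
  ContDiff.continuous h

lemma sm_div {f g : ℝ → ℝ → ℝ} (hf : Sm f) (hg : Sm g) (T : ℝ) :
    (∫ x in (0:ℝ)..1, ∫ t in (0:ℝ)..T, (pdx f x t + pdt g x t)) =
      (((∫ x in (0:ℝ)..1, g x T) - ∫ x in (0:ℝ)..1, g x 0) + ∫ t in (0:ℝ)..T, f 1 t) -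
        ∫ t in (0:ℝ)..T, f 0 t := by
  have := integral2_divergence_prod_of_hasFDerivAt
    (fun p : ℝ × ℝ => f p.1 p.2) (fun p : ℝ × ℝ => g p.1 p.2)
    (fderiv ℝ (fun p : ℝ × ℝ => f p.1 p.2)) (fderiv ℝ (fun p : ℝ × ℝ => g p.1 p.2)) 0 0 1 T
    hf.cont.continuousOn hg.cont.continuousOn
    (fun p _ => (ContDiff.differentiable hf (by simp) p).hasFDerivAt)
    (fun p _ => (ContDiff.differentiable hg (by simp) p).hasFDerivAt)
    (by
      simp only [hf.fx, hg.ft]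
      exact (hf.pdx.cont.add hg.pdt.cont).continuousOn.integrableOn_compact
        (isCompact_uIcc.prod isCompact_uIcc))
  simpa only [hf.fx, hg.ft] using this

/-- Cauchy–Schwarz for increments. -/
lemma sq_incr {f f' : ℝ → ℝ} (hf : ∀ x, HasDerivAt f (f' x) x) (hc : Continuous f') {a b : ℝ}
    (hab : a ≤ b) : (f b - f a) ^ 2 ≤ (b - a) * ∫ x in a..b, (f' x) ^ 2 := by
  rcases hab.eq_or_lt with rfl | hlt
  · simp
  have h1 : ∫ x in a..b, f' x = f b - f a :=
    intervalIntegral.integral_eq_sub_of_hasDerivAt (fun x _ => hf x) (hc.intervalIntegrable _ _)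
  set c := (f b - f a) / (b - a) with hcdef
  have hba : 0 < b - a := by linarith
  have hcm : c * (b - a) = f b - f a := by rw [hcdef]; field_simp
  have h0 : 0 ≤ ∫ x in a..b, (f' x - c) ^ 2 :=
    intervalIntegral.integral_nonneg hab (fun x _ => sq_nonneg _)
  have h2 : ∫ x in a..b, (f' x - c) ^ 2 =
      (∫ x in a..b, (f' x) ^ 2) - 2 * c * (f b - f a) + c ^ 2 * (b - a) := by
    have : ∀ x, (f' x - c) ^ 2 = (f' x) ^ 2 - 2 * c * f' x + c ^ 2 := fun x => by ring
    simp only [this]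
    rw [intervalIntegral.integral_add, intervalIntegral.integral_sub,
      intervalIntegral.integral_const_mul, h1]
    · simp; ring
    all_goals exact Continuous.intervalIntegrable (by fun_prop) _ _
  rw [h2] at h0
  rw [← hcm] at h0 ⊢
  nlinarith [mul_nonneg hba.le h0]

/-- interpolation -/
lemma interp {w w' : ℝ → ℝ} (hw : ∀ x, HasDerivAt w (w' x) x) (hc : Continuous w') {l : ℝ}
    (hl : 0 < l) {x : ℝ} (hx : x ∈ Set.Icc (0:ℝ) 1) :
    (w x) ^ 2 ≤ (∫ y in (0:ℝ)..1, (w y) ^ 2) +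
      ∫ y in (0:ℝ)..1, (l * (w y) ^ 2 + l⁻¹ * (w' y) ^ 2) := by
  have hwc : Continuous w := continuous_iff_continuousAt.2 (fun x => (hw x).continuousAt)
  set B := ∫ y in (0:ℝ)..1, (l * (w y) ^ 2 + l⁻¹ * (w' y) ^ 2) with hB
  have hcB : Continuous (fun y => l * (w y) ^ 2 + l⁻¹ * (w' y) ^ 2) := by fun_prop
  have key : ∀ y ∈ Set.Icc (0:ℝ) 1, (w x) ^ 2 ≤ (w y) ^ 2 + B := by
    intro y hy
    have h1 : ∫ z in y..x, 2 * w z * w' z = (w x) ^ 2 - (w y) ^ 2 := by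
      refine intervalIntegral.integral_eq_sub_of_hasDerivAt (f := fun z => (w z) ^ 2)
        (fun z _ => ?_) (Continuous.intervalIntegrable (by fun_prop) _ _)
      have := (hw z).pow 2
      simp only [Nat.cast_ofNat, Nat.add_one_sub_one, pow_one] at this
      exact this
    have h2 : |∫ z in y..x, 2 * w z * w' z| ≤ B := by
      calc |∫ z in y..x, 2 * w z * w' z|
          ≤ |∫ z in y..x, (l * (w z) ^ 2 + l⁻¹ * (w' z) ^ 2)| := by
            rw [← Real.norm_eq_abs]
            refine intervalIntegral.norm_integral_le_abs_of_norm_le (μ := volume)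
              (Filter.Eventually.of_forall fun z => ?_) (hcB.intervalIntegrable _ _)
            rw [Real.norm_eq_abs, abs_le]
            have e1 : l * (w z) ^ 2 + l⁻¹ * (w' z) ^ 2 - 2 * w z * w' z
              = l⁻¹ * (l * w z - w' z) ^ 2 := by field_simp; ring
            have e2 : l * (w z) ^ 2 + l⁻¹ * (w' z) ^ 2 + 2 * w z * w' z
              = l⁻¹ * (l * w z + w' z) ^ 2 := by field_simp; ring
            have e3 : 0 ≤ l⁻¹ * (l * w z - w' z) ^ 2 := by positivity
            have e4 : 0 ≤ l⁻¹ * (l * w z + w' z) ^ 2 := by positivity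
            constructor <;> linarith
        _ ≤ |B| := by
            refine intervalIntegral.abs_integral_mono_interval ?_
              (Filter.Eventually.of_forall fun z => ?_) (hcB.intervalIntegrable _ _)
            · rw [Set.uIoc_of_le (zero_le_one' ℝ)]
              exact Set.Ioc_subset_Ioc (le_min hy.1 hx.1) (max_le hy.2 hx.2)
            · simp only [Pi.zero_apply]; positivity
        _ = B := abs_of_nonneg (intervalIntegral.integral_nonneg (by norm_num)
            fun z _ => by positivity)
    have := le_abs_self (∫ z in y..x, 2 * w z * w' z)
    linarith
  have : ∫ y in (0:ℝ)..1, (w x) ^ 2 ≤ ∫ y in (0:ℝ)..1, ((w y) ^ 2 + B) :=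
    intervalIntegral.integral_mono_on (by norm_num) (by simp)
      (Continuous.intervalIntegrable (by fun_prop) _ _) key
  rw [intervalIntegral.integral_add (Continuous.intervalIntegrable (by fun_prop) _ _) (by simp)]
    at this
  simpa using this


lemma dcont {f : ℝ → ℝ → ℝ} (hf : Continuous (fun p : ℝ × ℝ => f p.1 p.2)) (a b : ℝ) :
    Continuous (fun x => ∫ t in a..b, f x t) :=
  intervalIntegral.continuous_parametric_intervalIntegral_of_continuous' (f := f) hf a b

lemma slice {f : ℝ → ℝ → ℝ} (hf : Continuous (fun p : ℝ × ℝ => f p.1 p.2)) (x : ℝ) :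
    Continuous (fun t => f x t) :=
  hf.comp (f := fun t : ℝ => (x, t)) (by fun_prop)

lemma slice' {f : ℝ → ℝ → ℝ} (hf : Continuous (fun p : ℝ × ℝ => f p.1 p.2)) (t : ℝ) :
    Continuous (fun x => f x t) :=
  hf.comp (f := fun x : ℝ => (x, t)) (by fun_prop)

lemma dmono {f g : ℝ → ℝ → ℝ} (hf : Continuous (fun p : ℝ × ℝ => f p.1 p.2))
    (hg : Continuous (fun p : ℝ × ℝ => g p.1 p.2)) {T : ℝ} (hT : 0 ≤ T)
    (h : ∀ x ∈ Set.Icc (0:ℝ) 1, ∀ t ∈ Set.Icc (0:ℝ) T, f x t ≤ g x t) :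
    (∫ x in (0:ℝ)..1, ∫ t in (0:ℝ)..T, f x t) ≤ ∫ x in (0:ℝ)..1, ∫ t in (0:ℝ)..T, g x t := by
  refine intervalIntegral.integral_mono_on (by norm_num)
    ((dcont hf _ _).intervalIntegrable _ _) ((dcont hg _ _).intervalIntegrable _ _) fun x hx => ?_
  exact intervalIntegral.integral_mono_on hT ((slice hf x).intervalIntegrable _ _)
    ((slice hg x).intervalIntegrable _ _) (h x hx)

lemma dlin {f g : ℝ → ℝ → ℝ} (hf : Continuous (fun p : ℝ × ℝ => f p.1 p.2))
    (hg : Continuous (fun p : ℝ × ℝ => g p.1 p.2)) (T a b : ℝ) :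
    (∫ x in (0:ℝ)..1, ∫ t in (0:ℝ)..T, (a * f x t - b * g x t)) =
      a * (∫ x in (0:ℝ)..1, ∫ t in (0:ℝ)..T, f x t) -
        b * ∫ x in (0:ℝ)..1, ∫ t in (0:ℝ)..T, g x t := by
  rw [← intervalIntegral.integral_const_mul, ← intervalIntegral.integral_const_mul,
    ← intervalIntegral.integral_sub]
  · congr 1; funext x
    rw [intervalIntegral.integral_sub, intervalIntegral.integral_const_mul,
      intervalIntegral.integral_const_mul]
    · exact ((slice hf x).const_mul a).intervalIntegrable _ _
    · exact ((slice hg x).const_mul b).intervalIntegrable _ _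
  · exact ((dcont hf 0 T).const_mul a).intervalIntegrable _ _
  · exact ((dcont hg 0 T).const_mul b).intervalIntegrable _ _

lemma dswap {f : ℝ → ℝ → ℝ} (hf : Continuous (fun p : ℝ × ℝ => f p.1 p.2)) (T : ℝ) :
    (∫ x in (0:ℝ)..1, ∫ t in (0:ℝ)..T, f x t) = ∫ t in (0:ℝ)..T, ∫ x in (0:ℝ)..1, f x t := by
  refine intervalIntegral_intervalIntegral_swap ?_
  refine IntegrableOn.mono_set (t := Set.uIcc 0 1 ×ˢ Set.uIcc 0 T) ?_
    (Set.prod_mono Set.uIoc_subset_uIcc Set.uIoc_subset_uIcc)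
  exact hf.continuousOn.integrableOn_compact (isCompact_uIcc.prod isCompact_uIcc)

def phi (p : ℝ) : ℝ := p * arctan p - 1 / 2 * Real.log (1 + p ^ 2)

lemma phi_deriv (p : ℝ) : HasDerivAt phi (arctan p) p := by
  have hp : (1 : ℝ) + p ^ 2 ≠ 0 := by positivity
  have h1 := (hasDerivAt_id p).mul (hasDerivAt_arctan p)
  have h2 : HasDerivAt (fun p : ℝ => 1 + p ^ 2) (2 * p) p := by
    have := ((hasDerivAt_id p).pow 2).const_add 1
    simpa using this
  have h3 := h1.sub ((h2.log hp).const_mul (1 / 2))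
  have e : arctan p = 1 * arctan p + id p * (1 / (1 + p ^ 2)) -
      1 / 2 * (2 * p / (1 + p ^ 2)) := by
    simp only [id]
    field_simp
    ring
  rw [e]
  exact h3

lemma phi_smooth : ContDiff ℝ (⊤ : ℕ∞) phi := by
  unfold phi
  refine (contDiff_id.mul contDiff_arctan).sub (contDiff_const.mul ?_)
  exact (contDiff_const.add (contDiff_id.pow 2)).log (fun p => by positivity)

lemma phi_le (p : ℝ) : phi p ≤ p ^ 2 + 1 := by
  have h1 : 0 ≤ Real.log (1 + p ^ 2) := Real.log_nonneg (by nlinarith [sq_nonneg p])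
  have h2 : |arctan p| ≤ 2 := by
    rw [abs_le]
    constructor <;> linarith [Real.neg_pi_div_two_lt_arctan p, Real.arctan_lt_pi_div_two p,
      Real.pi_lt_four]
  have h3 : p * arctan p ≤ |p| * 2 := by
    refine (le_abs_self _).trans ?_
    rw [abs_mul]
    exact mul_le_mul_of_nonneg_left h2 (abs_nonneg _)
  unfold phi
  nlinarith [sq_abs p, sq_nonneg (|p| - 1)]

lemma le_phi (p : ℝ) : -(p ^ 2) ≤ phi p := by
  have h1 : Real.log (1 + p ^ 2) ≤ p ^ 2 := by
    have := Real.log_le_sub_one_of_pos (show 0 < 1 + p ^ 2 by positivity)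
    linarith
  have h2 : 0 ≤ p * arctan p := by
    rcases le_total 0 p with h | h
    · exact mul_nonneg h (Real.arctan_nonneg.2 h)
    · exact mul_nonneg_of_nonpos_of_nonpos h (Real.arctan_le_zero.2 h)
  unfold phi
  nlinarith [sq_nonneg p]

lemma ux_sq {u : ℝ → ℝ → ℝ} (h : Sm u) {K t : ℝ}
    (hK : (∫ x in (0:ℝ)..1, ((u x t) ^ 2 + (pdx u x t) ^ 2)) ≤ K ^ 2) :
    (∫ x in (0:ℝ)..1, (pdx u x t) ^ 2) ≤ K ^ 2 := by
  have c1 := slice' h.cont t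
  have c2 := slice' h.pdx.cont t
  refine le_trans (intervalIntegral.integral_mono_on (by norm_num) ?_ ?_ fun x _ => ?_) hK
  · exact (c2.pow 2).intervalIntegrable _ _
  · exact ((c1.pow 2).add (c2.pow 2)).intervalIntegrable _ _
  · nlinarith [sq_nonneg (u x t)]

lemma energy {g u : ℝ → ℝ → ℝ} {T C K : ℝ} (hT : 0 < T) (hgb : ∀ a b, |g a b| ≤ C)
    (hu : IsGraphSol g T u)
    (hH : ∀ t ∈ Set.Icc (0:ℝ) T, (∫ x in (0:ℝ)..1, ((u x t) ^ 2 + (pdx u x t) ^ 2)) ≤ K ^ 2) :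
    (∫ x in (0:ℝ)..1, ∫ t in (0:ℝ)..T, (pdt u x t) ^ 2) ≤
      C ^ 2 * (T * (1 + K ^ 2)) + 2 * (2 * K ^ 2 + 1) := by
  obtain ⟨hs', heq, hbc⟩ := hu
  have hs : Sm u := hs'
  set f : ℝ → ℝ → ℝ := fun x t => -(arctan (pdx u x t) * pdt u x t) with hf
  set G : ℝ → ℝ → ℝ := fun x t => phi (pdx u x t) with hG
  have sf : Sm f := ((contDiff_arctan.comp hs.pdx).mul hs.pdt).neg
  have sG : Sm G := phi_smooth.comp hs.pdx
  have hS : ∀ x t, pdx f x t + pdt G x t =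
      -(pdx (pdx u) x t / (1 + (pdx u x t) ^ 2) * pdt u x t) := by
    intro x t
    have a1 : pdx f x t = _ := (((hs.pdx.hx x t).arctan.mul (hs.pdt.hx x t)).neg).deriv
    have a2 : pdt G x t = _ := ((phi_deriv (pdx u x t)).comp t (hs.pdx.ht x t)).deriv
    rw [a1, a2, hs.comm]
    ring
  have hdiv := sm_div sf sG T
  have hb : (∫ t in (0:ℝ)..T, f 1 t) = ∫ t in (0:ℝ)..T, f 0 t := by
    refine intervalIntegral.integral_congr fun t ht => ?_
    rw [Set.uIcc_of_le hT.le] at ht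
    have e : pdt u 1 t = pdt u 0 t := by
      have d1 := ((hs.ht 1 t).sub_const (u 1 0)).hasDerivWithinAt (s := Set.Icc 0 T)
      have d0 := ((hs.ht 0 t).sub_const (u 0 0)).hasDerivWithinAt (s := Set.Icc 0 T)
      have d1' := d1.congr (fun s hs => (hbc s hs).1) (hbc t ht).1
      exact (uniqueDiffOn_Icc hT t ht).eq_deriv _ d1' d0
    simp only [hf, e, (hbc t ht).2]
  rw [hb, add_sub_cancel_right] at hdiv
  have cq : Continuous (fun p : ℝ × ℝ => 1 + (pdx u p.1 p.2) ^ 2) :=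
    continuous_const.add (hs.pdx.cont.pow 2)
  have cS : Continuous (fun p : ℝ × ℝ => pdx f p.1 p.2 + pdt G p.1 p.2) :=
    sf.pdx.cont.add sG.pdt.cont
  have m := dmono (f := fun x t => (pdt u x t) ^ 2)
    (g := fun x t => C ^ 2 * (1 + (pdx u x t) ^ 2) - 2 * (pdx f x t + pdt G x t))
    (hs.pdt.cont.pow 2) ((cq.const_mul _).sub (cS.const_mul _)) hT.le (by
      intro x hx t ht
      simp only [hS]
      have e := heq x hx t ht
      have e' : pdx (pdx u) x t / (1 + (pdx u x t) ^ 2) =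
        pdt u x t - g x (u x t) * Real.sqrt (1 + (pdx u x t) ^ 2) := by linarith
      rw [e']
      have hq : Real.sqrt (1 + (pdx u x t) ^ 2) ^ 2 = 1 + (pdx u x t) ^ 2 :=
        Real.sq_sqrt (by positivity)
      have hg2 : (g x (u x t)) ^ 2 ≤ C ^ 2 := sq_le_sq' (abs_le.1 (hgb _ _)).1 (abs_le.1 (hgb _ _)).2
      have hq0 : C ^ 2 * (1 + (pdx u x t) ^ 2) =
        C ^ 2 * Real.sqrt (1 + (pdx u x t) ^ 2) ^ 2 := by rw [hq]
      rw [hq0]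
      generalize Real.sqrt (1 + (pdx u x t) ^ 2) = q
      nlinarith [mul_le_mul_of_nonneg_right hg2 (sq_nonneg q),
        sq_nonneg (pdt u x t - g x (u x t) * q)])
  rw [dlin (f := fun x t => 1 + (pdx u x t) ^ 2) (g := fun x t => pdx f x t + pdt G x t) cq cS T,
    hdiv, dswap (f := fun x t => 1 + (pdx u x t) ^ 2) cq] at m
  have q1 : (∫ t in (0:ℝ)..T, ∫ x in (0:ℝ)..1, (1 + (pdx u x t) ^ 2)) ≤ T * (1 + K ^ 2) := by
    have : (∫ t in (0:ℝ)..T, ∫ x in (0:ℝ)..1, (1 + (pdx u x t) ^ 2)) ≤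
        ∫ t in (0:ℝ)..T, (1 + K ^ 2) := by
      refine intervalIntegral.integral_mono_on hT.le ?_ (by simp) fun t ht => ?_
      · exact (dcont (f := fun t x => 1 + (pdx u x t) ^ 2)
          (cq.comp continuous_swap) 0 1).intervalIntegrable _ _
      · have := ux_sq hs (hH t ht)
        rw [intervalIntegral.integral_add (f := fun _ => 1) (g := fun x => (pdx u x t) ^ 2)
          intervalIntegrable_const
          (((slice' hs.pdx.cont t).pow 2).intervalIntegrable _ _)]
        simpa using this
    rw [intervalIntegral.integral_const] at this
    simpa only [sub_zero, smul_eq_mul] using this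
  have q2 : -(K ^ 2) ≤ ∫ x in (0:ℝ)..1, G x T := by
    have h1 := ux_sq hs (hH T ⟨hT.le, le_rfl⟩)
    have h2 : (∫ x in (0:ℝ)..1, -((pdx u x T) ^ 2)) ≤ ∫ x in (0:ℝ)..1, G x T :=
      intervalIntegral.integral_mono_on (by norm_num)
        (((slice' hs.pdx.cont T).pow 2).neg.intervalIntegrable _ _)
        ((slice' sG.cont T).intervalIntegrable _ _) fun x _ => le_phi _
    rw [intervalIntegral.integral_neg] at h2
    linarith
  have q3 : (∫ x in (0:ℝ)..1, G x 0) ≤ K ^ 2 + 1 := by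
    have h1 := ux_sq hs (hH 0 ⟨le_rfl, hT.le⟩)
    have h2 : (∫ x in (0:ℝ)..1, G x 0) ≤ ∫ x in (0:ℝ)..1, ((pdx u x 0) ^ 2 + 1) :=
      intervalIntegral.integral_mono_on (by norm_num)
        ((slice' sG.cont 0).intervalIntegrable _ _)
        ((((slice' hs.pdx.cont 0).pow 2).add continuous_const).intervalIntegrable _ _)
        fun x _ => phi_le _
    rw [intervalIntegral.integral_add (f := fun x => (pdx u x 0) ^ 2) (g := fun _ => 1)
      (((slice' hs.pdx.cont 0).pow 2).intervalIntegrable _ _) intervalIntegrable_const] at h2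
    simp only [intervalIntegral.integral_const, sub_zero, smul_eq_mul, mul_one] at h2
    linarith
  nlinarith [mul_le_mul_of_nonneg_left q1 (sq_nonneg C)]

lemma abs_le_of_sq_le' {a b : ℝ} (hb : 0 ≤ b) (h : a ^ 2 ≤ b ^ 2) : |a| ≤ b :=
  abs_le_of_sq_le_sq h hb

lemma holder_x {u : ℝ → ℝ → ℝ} (h : Sm u) {K t : ℝ} (hK0 : 0 < K)
    (hK : (∫ x in (0:ℝ)..1, ((u x t) ^ 2 + (pdx u x t) ^ 2)) ≤ K ^ 2) {x y : ℝ}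
    (hx : x ∈ Set.Icc (0:ℝ) 1) (hy : y ∈ Set.Icc (0:ℝ) 1) :
    |u x t - u y t| ≤ K * |x - y| ^ ((1:ℝ)/2) := by
  wlog hxy : y ≤ x generalizing x y
  · rw [abs_sub_comm, abs_sub_comm x]
    exact this hy hx (le_of_not_ge hxy)
  have c := slice' h.pdx.cont t
  have h1 := sq_incr (fun x => h.hx x t) c hxy
  have h2 : (∫ z in y..x, (pdx u z t) ^ 2) ≤ ∫ z in (0:ℝ)..1, (pdx u z t) ^ 2 :=
    intervalIntegral.integral_mono_interval hy.1 hxy hx.2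
      (Filter.Eventually.of_forall fun z => sq_nonneg _) ((c.pow 2).intervalIntegrable _ _)
  have h3 := ux_sq h hK
  have h4 : 0 ≤ x - y := by linarith
  refine abs_le_of_sq_le' (by positivity) ?_
  rw [← Real.sqrt_eq_rpow, mul_pow, Real.sq_sqrt (abs_nonneg _), abs_of_nonneg h4]
  nlinarith [mul_le_mul_of_nonneg_left (h2.trans h3) h4]

lemma holder_t {u : ℝ → ℝ → ℝ} (h : Sm u) {K T M : ℝ} (hM0 : 0 ≤ M)
    (hH : ∀ t ∈ Set.Icc (0:ℝ) T, (∫ x in (0:ℝ)..1, ((u x t) ^ 2 + (pdx u x t) ^ 2)) ≤ K ^ 2)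
    (hM : (∫ x in (0:ℝ)..1, ∫ t in (0:ℝ)..T, (pdt u x t) ^ 2) ≤ M)
    {x t s : ℝ} (hx : x ∈ Set.Icc (0:ℝ) 1) (ht : t ∈ Set.Icc (0:ℝ) T) (hs : s ∈ Set.Icc (0:ℝ) T) :
    |u x t - u x s| ≤ √(M * √T + M + 4 * K ^ 2) * |t - s| ^ ((1:ℝ)/4) := by
  wlog hst : s ≤ t generalizing s t
  · rw [abs_sub_comm, abs_sub_comm t]
    exact this hs ht (le_of_not_ge hst)
  rcases hst.eq_or_lt with rfl | hlt
  · simp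
  have hτ : 0 < t - s := by linarith
  have hr : 0 < √(t - s) := Real.sqrt_pos.2 hτ
  have hr2 : √(t - s) ^ 2 = t - s := Real.sq_sqrt hτ.le
  have hrT : √(t - s) ≤ √T := Real.sqrt_le_sqrt (by linarith [hs.1, ht.2])
  have c1 := slice' h.cont t
  have c2 := slice' h.cont s
  have d1 := slice' h.pdx.cont t
  have d2 := slice' h.pdx.cont s
  have key := interp (w := fun x => u x t - u x s) (w' := fun x => pdx u x t - pdx u x s)
    (fun x => (h.hx x t).sub (h.hx x s)) (d1.sub d2) (inv_pos.2 hr) hx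
  have cw : Continuous (fun x => u x t - u x s) := c1.sub c2
  have cw' : Continuous (fun x => pdx u x t - pdx u x s) := d1.sub d2
  have I1 : (∫ x in (0:ℝ)..1, (u x t - u x s) ^ 2) ≤ (t - s) * M := by
    have cI := dcont (f := fun x t => (pdt u x t) ^ 2) (h.pdt.cont.pow 2) 0 T
    have : (∫ x in (0:ℝ)..1, (u x t - u x s) ^ 2) ≤
        ∫ x in (0:ℝ)..1, (t - s) * ∫ t in (0:ℝ)..T, (pdt u x t) ^ 2 := by
      refine intervalIntegral.integral_mono_on (by norm_num) ((cw.pow 2).intervalIntegrable _ _)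
        ((cI.const_mul _).intervalIntegrable _ _) fun x _ => ?_
      refine (sq_incr (fun t => h.ht x t) (slice h.pdt.cont x) hst).trans ?_
      refine mul_le_mul_of_nonneg_left ?_ hτ.le
      exact intervalIntegral.integral_mono_interval hs.1 hst ht.2
        (Filter.Eventually.of_forall fun z => sq_nonneg _)
        (((slice h.pdt.cont x).pow 2).intervalIntegrable _ _)
    rw [intervalIntegral.integral_const_mul] at this
    exact this.trans (mul_le_mul_of_nonneg_left hM hτ.le)
  have I2 : (∫ x in (0:ℝ)..1, (pdx u x t - pdx u x s) ^ 2) ≤ 4 * K ^ 2 := by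
    have : (∫ x in (0:ℝ)..1, (pdx u x t - pdx u x s) ^ 2) ≤
        ∫ x in (0:ℝ)..1, (2 * (pdx u x t) ^ 2 + 2 * (pdx u x s) ^ 2) := by
      refine intervalIntegral.integral_mono_on (by norm_num) ((cw'.pow 2).intervalIntegrable _ _)
        (Continuous.intervalIntegrable (by fun_prop) _ _) fun x _ => ?_
      nlinarith [sq_nonneg (pdx u x t + pdx u x s)]
    rw [intervalIntegral.integral_add (Continuous.intervalIntegrable (by fun_prop) _ _)
      (Continuous.intervalIntegrable (by fun_prop) _ _), intervalIntegral.integral_const_mul,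
      intervalIntegral.integral_const_mul] at this
    linarith [ux_sq h (hH t ht), ux_sq h (hH s hs)]
  rw [intervalIntegral.integral_add (Continuous.intervalIntegrable (by fun_prop) _ _)
      (Continuous.intervalIntegrable (by fun_prop) _ _), intervalIntegral.integral_const_mul,
      intervalIntegral.integral_const_mul, inv_inv] at key
  have J1 : (√(t - s))⁻¹ * (∫ x in (0:ℝ)..1, (u x t - u x s) ^ 2) ≤ √(t - s) * M := by
    have := mul_le_mul_of_nonneg_left I1 (inv_pos.2 hr).le
    refine this.trans (le_of_eq ?_)
    nth_rewrite 2 [← hr2]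
    field_simp
  have J2 := mul_le_mul_of_nonneg_left I2 hr.le
  have J3 : (t - s) * M ≤ √(t - s) * (√T * M) := by
    nth_rewrite 1 [← hr2]
    rw [pow_two, mul_assoc]
    exact mul_le_mul_of_nonneg_left (mul_le_mul_of_nonneg_right hrT hM0) hr.le
  refine abs_le_of_sq_le' (by positivity) ?_
  have e : (|t - s| ^ ((1:ℝ)/4)) ^ 2 = √(t - s) := by
    rw [abs_of_pos hτ, ← Real.rpow_natCast, ← Real.rpow_mul hτ.le, Real.sqrt_eq_rpow]
    norm_num
  rw [mul_pow, e, Real.sq_sqrt (by positivity)]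
  linarith

theorem statement16 (T C K : ℝ) (hT : 0 < T) (hC : 0 < C) (hK : 0 < K)
    (u₀ : ℝ → ℝ) (hu₀ : ContDiff ℝ (⊤ : ℕ∞) u₀) (hu₀per : Function.Periodic u₀ 1)
    (g : ℕ → ℝ → ℝ → ℝ)
    (hg : ∀ n, ContDiff ℝ (⊤ : ℕ∞) (fun p : ℝ × ℝ => g n p.1 p.2))
    (hgb : ∀ n a b, |g n a b| ≤ C)
    (u : ℕ → ℝ → ℝ → ℝ) (hu : ∀ n, IsGraphSol (g n) T (u n))
    (hinit : ∀ n, ∀ x ∈ Set.Icc (0:ℝ) 1, u n x 0 = u₀ x)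
    (hH1 : ∀ n, ∀ t ∈ Set.Icc (0:ℝ) T,
      (∫ x in (0:ℝ)..1, ((u n x t) ^ 2 + (pdx (u n) x t) ^ 2)) ≤ K ^ 2) :
    ∃ φ : ℕ → ℕ, StrictMono φ ∧ ∃ v : ℝ → ℝ → ℝ, ∃ C' : ℝ,
      (∀ x ∈ Set.Icc (0:ℝ) 1, ∀ y ∈ Set.Icc (0:ℝ) 1,
        ∀ t ∈ Set.Icc (0:ℝ) T, ∀ s ∈ Set.Icc (0:ℝ) T,
          |v x t - v y s| ≤ C' * (|x - y| ^ ((1:ℝ)/2) + |t - s| ^ ((1:ℝ)/4))) ∧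
      TendstoUniformlyOn (fun k (p : ℝ × ℝ) => u (φ k) p.1 p.2) (fun p => v p.1 p.2)
        Filter.atTop (Set.Icc 0 1 ×ˢ Set.Icc 0 T) := by
  set M := C ^ 2 * (T * (1 + K ^ 2)) + 2 * (2 * K ^ 2 + 1) with hM
  have hM0 : 0 ≤ M := by positivity
  set A := √(M * √T + M + 4 * K ^ 2) with hA
  have hA0 : 0 ≤ A := Real.sqrt_nonneg _
  set C' := K + A with hC'
  have hC0 : 0 ≤ C' := by positivity
  have hol : ∀ n, ∀ x ∈ Set.Icc (0:ℝ) 1, ∀ y ∈ Set.Icc (0:ℝ) 1,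
        ∀ t ∈ Set.Icc (0:ℝ) T, ∀ s ∈ Set.Icc (0:ℝ) T,
          |u n x t - u n y s| ≤ C' * (|x - y| ^ ((1:ℝ)/2) + |t - s| ^ ((1:ℝ)/4)) := by
    intro n x hx y hy t ht s hs
    have h : Sm (u n) := (hu n).1
    have h1 := holder_x h hK (hH1 n t ht) hx hy
    have h2 := holder_t h hM0 (hH1 n) (energy hT (hgb n) (hu n) (hH1 n)) hy ht hs
    have h3 := abs_sub_le (u n x t) (u n y t) (u n y s)
    have p1 : 0 ≤ |x - y| ^ ((1:ℝ)/2) := by positivity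
    have p2 : 0 ≤ |t - s| ^ ((1:ℝ)/4) := by positivity
    rw [← hA] at h2
    nlinarith [mul_nonneg hA0 p1, mul_nonneg hK.le p2]
  let X := (Set.Icc (0:ℝ) 1 ×ˢ Set.Icc (0:ℝ) T : Set (ℝ × ℝ))
  haveI : CompactSpace X := isCompact_iff_compactSpace.1 (isCompact_Icc.prod isCompact_Icc)
  let F : ℕ → BoundedContinuousFunction X ℝ := fun n =>
    BoundedContinuousFunction.mkOfCompact
      ⟨fun p => u n p.1.1 p.1.2, (Sm.cont (hu n).1).comp continuous_subtype_val⟩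
  have hF : ∀ n (p : X), F n p = u n p.1.1 p.1.2 := fun n p => rfl
  have z1 : (0:ℝ) ∈ Set.Icc (0:ℝ) 1 := by simp
  have zT : (0:ℝ) ∈ Set.Icc (0:ℝ) T := ⟨le_rfl, hT.le⟩
  have hcomp : IsCompact (closure (Set.range F)) := by
    refine BoundedContinuousFunction.arzela_ascoli
      (Metric.closedBall (u₀ 0) (C' * (1 + T ^ ((1:ℝ)/4)))) (isCompact_closedBall _ _) _ ?_ ?_
    · rintro _ p ⟨n, rfl⟩
      rw [Metric.mem_closedBall, Real.dist_eq, hF, ← hinit n 0 z1]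
      refine (hol n _ p.2.1 0 z1 _ p.2.2 0 zT).trans ?_
      refine mul_le_mul_of_nonneg_left (add_le_add ?_ ?_) hC0
      · refine Real.rpow_le_one (abs_nonneg _) ?_ (by norm_num)
        rw [sub_zero, abs_of_nonneg p.2.1.1]; exact p.2.1.2
      · refine Real.rpow_le_rpow (abs_nonneg _) ?_ (by norm_num)
        rw [sub_zero, abs_of_nonneg p.2.2.1]; exact p.2.2.2
    · refine Metric.equicontinuous_of_continuity_modulus
        (fun d => C' * (d ^ ((1:ℝ)/2) + d ^ ((1:ℝ)/4))) ?_ _ ?_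
      · have : Continuous (fun d : ℝ => C' * (d ^ ((1:ℝ)/2) + d ^ ((1:ℝ)/4))) :=
          continuous_const.mul ((Real.continuous_rpow_const (by norm_num)).add
            (Real.continuous_rpow_const (by norm_num)))
        have h0 := this.tendsto 0
        simpa using h0
      · rintro p q ⟨_, n, rfl⟩
        change dist (F n p) (F n q) ≤ _
        rw [Real.dist_eq, hF, hF]
        refine (hol n _ p.2.1 _ q.2.1 _ p.2.2 _ q.2.2).trans ?_
        refine mul_le_mul_of_nonneg_left (add_le_add ?_ ?_) hC0
        · exact Real.rpow_le_rpow (abs_nonneg _) (le_max_left _ _) (by norm_num)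
        · exact Real.rpow_le_rpow (abs_nonneg _) (le_max_right _ _) (by norm_num)
  obtain ⟨G, -, φ, hφ, hlim⟩ := hcomp.tendsto_subseq
    (fun n => subset_closure (Set.mem_range_self (f := F) n))
  classical
  have hunif := BoundedContinuousFunction.tendsto_iff_tendstoUniformly.1 hlim
  refine ⟨φ, hφ, fun x t => if h : (x, t) ∈ X then G ⟨(x, t), h⟩ else 0, C', ?_, ?_⟩
  · intro x hx y hy t ht s hs
    have m1 : (x, t) ∈ X := ⟨hx, ht⟩
    have m2 : (y, s) ∈ X := ⟨hy, hs⟩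
    simp only [dif_pos m1, dif_pos m2]
    have l1 := hunif.tendsto_at ⟨(x, t), m1⟩
    have l2 := hunif.tendsto_at ⟨(y, s), m2⟩
    refine le_of_tendsto (l1.sub l2).abs (Filter.Eventually.of_forall fun k => ?_)
    exact hol (φ k) x hx y hy t ht s hs
  · rw [Metric.tendstoUniformlyOn_iff]
    rw [Metric.tendstoUniformly_iff] at hunif
    intro ε hε
    filter_upwards [hunif ε hε] with k hk p hp
    have hp' : (p.1, p.2) ∈ X := hp
    simp only [dif_pos hp']
    exact hk ⟨p, hp⟩
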